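/- arXiv:2202.09402 — 11 statements merged into one kernel-verified Lean document; each statement's English description precedes it below -/
import Mathlib

section
/- Every safety-function iterate takes values in the finite set D = {0} ∪ {‖f (q i) + ξ s − q j‖ : i ∈ Fin N, s ∈ Fin M, j ∈ Fin N}, i.e. for all k and i one has U_k(i) ∈ D; consequently the iteration stabilizes after finitely many steps: there exists K ∈ ℕ with U_{K+1} = U_K. -/
/-- The safety operator of the partial control method:
`(T U) i = max_{s} min_{j} max (‖f (q i) + ξ s - q j‖) (U j)`. -/
noncomputable def safetyOp {X : Type*} [NormedAddCommGroup X] {N M : ℕ}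
    [NeZero N] [NeZero M] (q : Fin N → X) (f : X → X) (ξ : Fin M → X)
    (U : Fin N → ℝ) : Fin N → ℝ :=
  fun i => Finset.univ.sup' Finset.univ_nonempty fun s : Fin M =>
    Finset.univ.inf' Finset.univ_nonempty fun j : Fin N =>
      max ‖f (q i) + ξ s - q j‖ (U j)

/-- The safety-function iterates: `U₀ = 0` and `U_{k+1} = T U_k`. -/
noncomputable def safetyIter {X : Type*} [NormedAddCommGroup X] {N M : ℕ}
    [NeZero N] [NeZero M] (q : Fin N → X) (f : X → X) (ξ : Fin M → X) :
    ℕ → Fin N → ℝ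
  | 0 => 0
  | k + 1 => safetyOp q f ξ (safetyIter q f ξ k)

theorem safetyOp_mono {X : Type*} [NormedAddCommGroup X] {N M : ℕ}
    [NeZero N] [NeZero M] (q : Fin N → X) (f : X → X) (ξ : Fin M → X) :
    Monotone (safetyOp q f ξ) := by
  intro U V h i
  unfold safetyOp
  refine Finset.sup'_mono_fun fun s _ => ?_
  refine Finset.inf'_mono_fun fun j _ => ?_
  exact max_le_max le_rfl (h j)

theorem safetyIter_mem {X : Type*} [NormedAddCommGroup X] {N M : ℕ}
    [NeZero N] [NeZero M] (q : Fin N → X) (f : X → X) (ξ : Fin M → X) (k : ℕ) (i : Fin N) :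
      safetyIter q f ξ k i ∈
        insert (0 : ℝ) ((Finset.univ : Finset (Fin N × Fin M × Fin N)).image
          fun p => ‖f (q p.1) + ξ p.2.1 - q p.2.2‖) := by
  induction k generalizing i with
  | zero => exact Finset.mem_insert_self _ _
  | succ k ih =>
    rw [safetyIter, safetyOp]
    obtain ⟨s, -, hs⟩ := Finset.exists_mem_eq_sup' (s := Finset.univ) Finset.univ_nonempty
      (fun s : Fin M => Finset.univ.inf' Finset.univ_nonempty fun j : Fin N =>
        max ‖f (q i) + ξ s - q j‖ (safetyIter q f ξ k j))
    rw [hs]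
    obtain ⟨j, -, hj⟩ := Finset.exists_mem_eq_inf' (s := Finset.univ) Finset.univ_nonempty
      (fun j : Fin N => max ‖f (q i) + ξ s - q j‖ (safetyIter q f ξ k j))
    rw [hj]
    rcases max_choice ‖f (q i) + ξ s - q j‖ (safetyIter q f ξ k j) with h | h
    · rw [h]
      exact Finset.mem_insert_of_mem
        (Finset.mem_image.2 ⟨(i, s, j), Finset.mem_univ _, rfl⟩)
    · rw [h]
      exact ih j

theorem safetyIter_mono {X : Type*} [NormedAddCommGroup X] {N M : ℕ}
    [NeZero N] [NeZero M] (q : Fin N → X) (f : X → X) (ξ : Fin M → X) :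
    Monotone (safetyIter q f ξ) := by
  refine monotone_nat_of_le_succ fun k => ?_
  induction k with
  | zero =>
    intro i
    have h := safetyIter_mem q f ξ 1 i
    rw [Finset.mem_insert, Finset.mem_image] at h
    change (0 : ℝ) ≤ safetyIter q f ξ 1 i
    rcases h with h | ⟨p, -, h⟩
    · exact h.ge
    · rw [← h]
      exact norm_nonneg _
  | succ k ih => exact safetyOp_mono q f ξ ih

/-- Every iterate takes values in the finite set
`D = {0} ∪ {‖f (q i) + ξ s − q j‖}`, hence the iteration stabilizes. -/
theorem safetyIter_finite_values_and_stabilizes {X : Type*} [NormedAddCommGroup X]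
    {N M : ℕ} [NeZero N] [NeZero M] (q : Fin N → X) (f : X → X) (ξ : Fin M → X) :
    (∀ (k : ℕ) (i : Fin N),
      safetyIter q f ξ k i ∈
        insert (0 : ℝ) ((Finset.univ : Finset (Fin N × Fin M × Fin N)).image
          fun p => ‖f (q p.1) + ξ p.2.1 - q p.2.2‖)) ∧
    ∃ K : ℕ, safetyIter q f ξ (K + 1) = safetyIter q f ξ K := by
  refine ⟨safetyIter_mem q f ξ, ?_⟩
  have hmem := safetyIter_mem q f ξ
  generalize (insert (0 : ℝ) ((Finset.univ : Finset (Fin N × Fin M × Fin N)).image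
          fun p => ‖f (q p.1) + ξ p.2.1 - q p.2.2‖)) = D at hmem
  have hfin : {g : Fin N → ℝ | ∀ i, g i ∈ (D : Set ℝ)}.Finite :=
    Set.Finite.pi' fun _ => D.finite_toSet
  obtain ⟨m, n, hmn, h⟩ := Set.Finite.exists_lt_map_eq_of_forall_mem
    (t := {g : Fin N → ℝ | ∀ i, g i ∈ (D : Set ℝ)})
    (f := safetyIter q f ξ) (fun k i => Finset.mem_coe.2 (hmem k i)) hfin
  refine ⟨m, le_antisymm ?_ (safetyIter_mono q f ξ m.le_succ)⟩
  rw [h]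
  exact safetyIter_mono q f ξ hmn
end

section
/- If the safety-function iteration stabilizes at step K, i.e. U_{K+1} = U_K, then U_∞ := U_K is a fixed point of the safety operator T, and it is the least nonnegative fixed point: every function V : Fin N → ℝ with 0 ≤ V pointwise and T V = V satisfies U_∞(i) ≤ V(i) for all i. -/
/-- If the iteration stabilizes at step `K`, then `U_∞ := U_K` is a fixed point of the
safety operator, and the least nonnegative one. -/
theorem safetyIter_stabilized_least_fixed_point {X : Type*} [NormedAddCommGroup X]
    {N M : ℕ} [NeZero N] [NeZero M] (q : Fin N → X) (f : X → X) (ξ : Fin M → X)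
    (K : ℕ) (hK : safetyIter q f ξ (K + 1) = safetyIter q f ξ K) :
    safetyOp q f ξ (safetyIter q f ξ K) = safetyIter q f ξ K ∧
    ∀ V : Fin N → ℝ, (∀ i, 0 ≤ V i) → safetyOp q f ξ V = V →
      ∀ i, safetyIter q f ξ K i ≤ V i := by
  refine ⟨hK, fun V hV hT => ?_⟩
  have mono : ∀ U W : Fin N → ℝ, (∀ i, U i ≤ W i) →
      ∀ i, safetyOp q f ξ U i ≤ safetyOp q f ξ W i := by
    intro U W h i
    unfold safetyOp
    refine Finset.sup'_mono_fun fun s _ => ?_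
    refine Finset.inf'_mono_fun fun j _ => ?_
    exact max_le_max le_rfl (h j)
  have key : ∀ k, ∀ i, safetyIter q f ξ k i ≤ V i := by
    intro k
    induction k with
    | zero => exact hV
    | succ k ih =>
      intro i
      have h := mono _ _ ih i
      rw [hT] at h
      exact h
  exact key K
end

section
/- Infinite-horizon controllability: let U : Fin N → ℝ be a fixed point of the safety operator T with U ≥ 0 pointwise, let u₀ ∈ ℝ, let i₀ ∈ Fin N satisfy U(i₀) ≤ u₀, and let s : ℕ → Fin M be an arbitrary disturbance sequence. Then there exists a sequence of grid indices i : ℕ → Fin N with i(0) = i₀ such that for every n the control u_n := q (i(n+1)) − f (q (i(n))) − ξ (s(n)) satisfies ‖u_n‖ ≤ u₀ and U(i(n+1)) ≤ u₀; in particular the controlled orbit x_{n+1} = f(x_n) + ξ(s(n)) + u_n starting at x₀ = q(i₀) remains forever in the safe set {q j : U(j) ≤ u₀}. -/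
/-- Infinite-horizon controllability: starting in the sublevel set `{U ≤ u₀}` of a
nonnegative fixed point of the safety operator, for any disturbance sequence there is a
sequence of grid points (the controlled orbit) whose controls are bounded by `u₀` and
which stays forever in the safe set `{q j : U j ≤ u₀}`. -/
theorem infinite_horizon_controllability {X : Type*} [NormedAddCommGroup X]
    {N M : ℕ} [NeZero N] [NeZero M] (q : Fin N → X) (f : X → X) (ξ : Fin M → X)
    (U : Fin N → ℝ) (hfix : safetyOp q f ξ U = U) (hpos : ∀ i, 0 ≤ U i)
    (u₀ : ℝ) (i₀ : Fin N) (hi₀ : U i₀ ≤ u₀) (s : ℕ → Fin M) :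
    ∃ i : ℕ → Fin N, i 0 = i₀ ∧ ∀ n : ℕ,
      ‖q (i (n + 1)) - f (q (i n)) - ξ (s n)‖ ≤ u₀ ∧ U (i (n + 1)) ≤ u₀ := by
  have step : ∀ (t : Fin M) (a : Fin N), ∃ b : Fin N, U a ≤ u₀ →
      ‖q b - f (q a) - ξ t‖ ≤ u₀ ∧ U b ≤ u₀ := by
    intro t a
    obtain ⟨b, -, hb⟩ := Finset.exists_mem_eq_inf' (Finset.univ_nonempty (α := Fin N))
      (fun j : Fin N => max ‖f (q a) + ξ t - q j‖ (U j))
    refine ⟨b, fun ha => ?_⟩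
    have h1 : Finset.univ.inf' Finset.univ_nonempty
        (fun j : Fin N => max ‖f (q a) + ξ t - q j‖ (U j)) ≤ safetyOp q f ξ U a :=
      Finset.le_sup' (fun s : Fin M => Finset.univ.inf' Finset.univ_nonempty
        fun j : Fin N => max ‖f (q a) + ξ s - q j‖ (U j)) (Finset.mem_univ t)
    rw [hfix, hb] at h1
    have h2 := max_le_iff.1 (h1.trans ha)
    refine ⟨?_, h2.2⟩
    rw [sub_sub, norm_sub_rev]
    exact h2.1
  choose g hg using step
  let i : ℕ → Fin N := fun n => Nat.rec i₀ (fun k a => g (s k) a) n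
  have hi : ∀ n, U (i n) ≤ u₀ := by
    intro n
    induction n with
    | zero => exact hi₀
    | succ k ih => exact (hg (s k) (i k) ih).2
  exact ⟨i, rfl, fun n => hg (s n) (i n) (hi n)⟩
end

section
/- Game-theoretic characterization of the safety-function iterates: fix u₀ ≥ 0 and define inductively the predicates Safe₀(i) := True and Safe_{k+1}(i) := ∀ s : Fin M, ∃ j : Fin N, ‖f (q i) + ξ s − q j‖ ≤ u₀ ∧ Safe_k(j). Then for every k ∈ ℕ and every i ∈ Fin N, Safe_k(i) holds if and only if U_k(i) ≤ u₀. -/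
/-- The game-theoretic safety predicates: `Safe₀ i = True` and
`Safe_{k+1} i = ∀ s, ∃ j, ‖f (q i) + ξ s − q j‖ ≤ u₀ ∧ Safe_k j`. -/
def safePred {X : Type*} [NormedAddCommGroup X] {N M : ℕ}
    (q : Fin N → X) (f : X → X) (ξ : Fin M → X) (u₀ : ℝ) : ℕ → Fin N → Prop
  | 0 => fun _ => True
  | k + 1 => fun i => ∀ s : Fin M, ∃ j : Fin N,
      ‖f (q i) + ξ s - q j‖ ≤ u₀ ∧ safePred q f ξ u₀ k j

/-- Game-theoretic characterization of the safety-function iterates. -/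
theorem safePred_iff_safetyIter_le {X : Type*} [NormedAddCommGroup X]
    {N M : ℕ} [NeZero N] [NeZero M] (q : Fin N → X) (f : X → X) (ξ : Fin M → X)
    (u₀ : ℝ) (hu₀ : 0 ≤ u₀) :
    ∀ (k : ℕ) (i : Fin N), safePred q f ξ u₀ k i ↔ safetyIter q f ξ k i ≤ u₀ := by
  intro k
  induction k with
  | zero => intro i; simp [safePred, safetyIter, hu₀]
  | succ k ih =>
    intro i
    simp only [safePred, safetyIter, safetyOp, Finset.sup'_le_iff, Finset.inf'_le_iff,
      Finset.mem_univ, true_and, forall_const, max_le_iff, ih]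
end

section
/- Optimality of the safety function against all control strategies: fix u₀ ≥ 0 and i₀ ∈ Fin N. Suppose there is a control strategy σ : List (Fin M) → Fin N with σ([]) = i₀ such that for every infinite disturbance sequence s : ℕ → Fin M and every n ∈ ℕ, ‖f (q (σ (first n values of s))) + ξ (s n) − q (σ (first n+1 values of s))‖ ≤ u₀. Then U_k(i₀) ≤ u₀ for every k ∈ ℕ. -/
/-- Optimality of the safety function against all control strategies: if some strategy
`σ` keeps the one-step control below `u₀` against every disturbance sequence, then all
safety-function iterates at the starting index are at most `u₀`. -/
theorem safetyIter_le_of_strategy {X : Type*} [NormedAddCommGroup X]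
    {N M : ℕ} [NeZero N] [NeZero M] (q : Fin N → X) (f : X → X) (ξ : Fin M → X)
    (u₀ : ℝ) (hu₀ : 0 ≤ u₀) (i₀ : Fin N)
    (σ : List (Fin M) → Fin N) (hσ₀ : σ [] = i₀)
    (hσ : ∀ (s : ℕ → Fin M) (n : ℕ),
      ‖f (q (σ (List.ofFn fun m : Fin n => s m))) + ξ (s n)
        - q (σ (List.ofFn fun m : Fin (n + 1) => s m))‖ ≤ u₀) :
    ∀ k : ℕ, safetyIter q f ξ k i₀ ≤ u₀ := by
  have step : ∀ (l : List (Fin M)) (a : Fin M),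
      ‖f (q (σ l)) + ξ a - q (σ (l ++ [a]))‖ ≤ u₀ := by
    intro l a
    have h := hσ (fun n => (l ++ [a]).getD n a) l.length
    have h1 : (List.ofFn fun m : Fin l.length => (l ++ [a]).getD m a) = l := by
      apply List.ext_getElem
      · simp
      · intro n h1 h2
        simp [List.getElem?_append, h2]
    have h2 : (List.ofFn fun m : Fin (l.length + 1) => (l ++ [a]).getD m a) = l ++ [a] := by
      apply List.ext_getElem
      · simp
      · intro n h1 h2
        rw [List.getElem_ofFn]
        exact List.getD_eq_getElem _ _ h2
    have h3 : (l ++ [a]).getD l.length a = a := by simp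
    simp only [h1, h2, h3] at h
    exact h
  have key : ∀ (k : ℕ) (l : List (Fin M)), safetyIter q f ξ k (σ l) ≤ u₀ := by
    intro k
    induction k with
    | zero => intro l; simpa [safetyIter] using hu₀
    | succ k ih =>
      intro l
      simp only [safetyIter, safetyOp]
      refine Finset.sup'_le _ _ fun a _ => ?_
      exact (Finset.inf'_le _ (Finset.mem_univ (σ (l ++ [a])))).trans
        (max_le (step l a) (ih _))
  intro k
  rw [← hσ₀]
  exact key k []
end

section
/- Maximality of the sublevel safe set: fix u₀ ≥ 0 and suppose A ⊆ Fin N satisfies the classical safe-set property: for every i ∈ A and every s ∈ Fin M there exists j ∈ A with ‖f (q i) + ξ s − q j‖ ≤ u₀. Then every i ∈ A satisfies U_k(i) ≤ u₀ for all k ∈ ℕ. -/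
/-- Maximality of the sublevel safe set: any set with the classical safe-set property is
contained in every sublevel set `{U_k ≤ u₀}` of the safety-function iterates. -/
theorem safe_set_subset_sublevel {X : Type*} [NormedAddCommGroup X]
    {N M : ℕ} [NeZero N] [NeZero M] (q : Fin N → X) (f : X → X) (ξ : Fin M → X)
    (u₀ : ℝ) (hu₀ : 0 ≤ u₀) (A : Set (Fin N))
    (hA : ∀ i ∈ A, ∀ s : Fin M, ∃ j ∈ A, ‖f (q i) + ξ s - q j‖ ≤ u₀) :
    ∀ i ∈ A, ∀ k : ℕ, safetyIter q f ξ k i ≤ u₀ := by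
  intro i hi k
  induction k generalizing i with
  | zero => simpa [safetyIter] using hu₀
  | succ k ih =>
    simp only [safetyIter, safetyOp]
    refine Finset.sup'_le _ _ fun s _ => ?_
    obtain ⟨j, hj, hle⟩ := hA i hi s
    exact (Finset.inf'_le _ (Finset.mem_univ j)).trans (max_le hle (ih j hj))
end

section
/- Existence criterion for safe sets: fix u₀ ≥ 0 and assume the safety-function iteration stabilizes at step K, with U_∞ := U_K satisfying U_{K+1} = U_K. Then there exists a nonempty set A ⊆ Fin N with the classical safe-set property (for every i ∈ A and every s ∈ Fin M there exists j ∈ A with ‖f (q i) + ξ s − q j‖ ≤ u₀) if and only if u₀ ≥ min_{i ∈ Fin N} U_∞(i). -/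
/-- Existence criterion for safe sets: a nonempty classical safe set for the control
bound `u₀` exists iff `u₀` is at least the minimum of the stabilized safety function. -/
theorem safe_set_exists_iff_min_safety_le {X : Type*} [NormedAddCommGroup X]
    {N M : ℕ} [NeZero N] [NeZero M] (q : Fin N → X) (f : X → X) (ξ : Fin M → X)
    (u₀ : ℝ) (hu₀ : 0 ≤ u₀) (K : ℕ)
    (hK : safetyIter q f ξ (K + 1) = safetyIter q f ξ K) :
    (∃ A : Set (Fin N), A.Nonempty ∧
        ∀ i ∈ A, ∀ s : Fin M, ∃ j ∈ A, ‖f (q i) + ξ s - q j‖ ≤ u₀) ↔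
      Finset.univ.inf' Finset.univ_nonempty (safetyIter q f ξ K) ≤ u₀ := by
  have key : ∀ (U : Fin N → ℝ) (i : Fin N), safetyOp q f ξ U i ≤ u₀ ↔
      ∀ s : Fin M, ∃ j : Fin N, ‖f (q i) + ξ s - q j‖ ≤ u₀ ∧ U j ≤ u₀ := by
    intro U i
    simp [safetyOp, Finset.sup'_le_iff, Finset.inf'_le_iff]
  constructor
  · rintro ⟨A, ⟨a, ha⟩, hA⟩
    have h : ∀ k, ∀ i ∈ A, safetyIter q f ξ k i ≤ u₀ := by
      intro k
      induction k with
      | zero => intro i _; simpa [safetyIter] using hu₀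
      | succ k ih =>
        intro i hi
        rw [safetyIter, key]
        intro s
        obtain ⟨j, hj, hn⟩ := hA i hi s
        exact ⟨j, hn, ih j hj⟩
    exact (Finset.inf'_le _ (Finset.mem_univ a)).trans (h K a ha)
  · intro h
    obtain ⟨a, -, ha⟩ := (Finset.inf'_le_iff _).1 h
    refine ⟨{i | safetyIter q f ξ K i ≤ u₀}, ⟨a, ha⟩, ?_⟩
    intro i hi s
    have hi' : safetyIter q f ξ K i ≤ u₀ := hi
    rw [← hK, safetyIter, key] at hi'
    obtain ⟨j, hn, hj⟩ := hi' s
    exact ⟨j, hj, hn⟩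
end

section
/- Refining the grid does not increase the safety function: let q : Fin N → X and q' : Fin N' → X be two grids such that q factors through q', i.e. there is a map ι : Fin N → Fin N' with q = q' ∘ ι. Let (U_k) and (U'_k) be the safety-function iterates built with the same map f and disturbance family ξ on the grids q and q' respectively. Then U'_k(ι i) ≤ U_k(i) for every k ∈ ℕ and every i ∈ Fin N. -/
/-- Refining the grid does not increase the safety function: if the grid `q` factors
through the finer grid `q'`, the safety-function iterates on `q'` are bounded, along the
embedding, by those on `q`. -/
theorem safetyIter_anti_in_grid {X : Type*} [NormedAddCommGroup X]
    {N N' M : ℕ} [NeZero N] [NeZero N'] [NeZero M] (f : X → X) (ξ : Fin M → X)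
    (q : Fin N → X) (q' : Fin N' → X) (ι : Fin N → Fin N') (hι : q = q' ∘ ι) :
    ∀ (k : ℕ) (i : Fin N), safetyIter q' f ξ k (ι i) ≤ safetyIter q f ξ k i := by
  intro k
  subst hι
  induction k with
  | zero => intro i; simp [safetyIter]
  | succ k ih =>
    intro i
    simp only [safetyIter, safetyOp]
    refine Finset.sup'_mono_fun fun s _ => ?_
    refine Finset.le_inf' _ _ fun j _ => ?_
    exact (Finset.inf'_le _ (Finset.mem_univ (ι j))).trans (max_le_max le_rfl (ih j))
end

section
/- Uniform bound for the safety function: set C := max_{i ∈ Fin N, s ∈ Fin M} min_{j ∈ Fin N} ‖f (q i) + ξ s − q j‖. Then every safety-function iterate satisfies U_k(i) ≤ C for all k ∈ ℕ and all i ∈ Fin N. -/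
/-- Uniform bound for the safety function:
`U_k(i) ≤ C := max_{i,s} min_{j} ‖f (q i) + ξ s − q j‖` for all `k` and `i`. -/
theorem safetyIter_le_uniform_bound {X : Type*} [NormedAddCommGroup X]
    {N M : ℕ} [NeZero N] [NeZero M] (q : Fin N → X) (f : X → X) (ξ : Fin M → X) :
    ∀ (k : ℕ) (i : Fin N),
      safetyIter q f ξ k i ≤
        Finset.univ.sup' Finset.univ_nonempty fun p : Fin N × Fin M =>
          Finset.univ.inf' Finset.univ_nonempty fun j : Fin N =>
            ‖f (q p.1) + ξ p.2 - q j‖ := by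
  intro k
  induction k with
  | zero =>
    intro i
    refine le_trans ?_ (Finset.le_sup' _ (Finset.mem_univ ((i, 0) : Fin N × Fin M)))
    refine Finset.le_inf' _ _ ?_
    intro j _
    exact norm_nonneg _
  | succ k ih =>
    intro i
    refine Finset.sup'_le Finset.univ_nonempty _ ?_
    intro s _
    obtain ⟨j, _, hj⟩ := Finset.exists_mem_eq_inf' (Finset.univ_nonempty (α := Fin N))
      (fun j : Fin N => ‖f (q i) + ξ s - q j‖)
    refine le_trans (Finset.inf'_le _ (Finset.mem_univ j)) (max_le ?_ (ih j))
    refine le_trans hj.ge ?_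
    exact Finset.le_sup' (fun p : Fin N × Fin M =>
      Finset.univ.inf' Finset.univ_nonempty fun j : Fin N =>
        ‖f (q p.1) + ξ p.2 - q j‖) (Finset.mem_univ ((i, s) : Fin N × Fin M))
end

section
/- Escape to infinity for the Hénon map with a = 6, b = 0.4: let (x_n, y_n) = H^[n](x₀, y₀). If x₀ ≤ −4 and x₀ ≤ y₀, then for every n one has x_{n+1} ≤ x_n − 4.4, the first-coordinate sequence (x_n) is strictly decreasing and tends to −∞ (tends to atBot), and the orbit leaves the square Q = [−4,4] × [−4,4] with ‖(x_n, y_n)‖ tending to infinity. -/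
/-- The Hénon map with parameters `a = 6`, `b = 0.4`. -/
noncomputable def henon : ℝ × ℝ → ℝ × ℝ := fun p => (6 - 0.4 * p.2 - p.1 ^ 2, p.1)

/-- Escape to infinity for the Hénon map with `a = 6`, `b = 0.4`: if `x₀ ≤ −4` and
`x₀ ≤ y₀`, then the first coordinate decreases by at least `4.4` at every step, is
strictly decreasing and tends to `−∞`, and the orbit leaves the square
`Q = [−4,4] × [−4,4]` with its norm tending to infinity. -/
theorem henon_escape_to_infinity (x₀ y₀ : ℝ) (hx : x₀ ≤ -4) (hxy : x₀ ≤ y₀) :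
    (∀ n : ℕ, (henon^[n + 1] (x₀, y₀)).1 ≤ (henon^[n] (x₀, y₀)).1 - 4.4) ∧
    StrictAnti (fun n : ℕ => (henon^[n] (x₀, y₀)).1) ∧
    Filter.Tendsto (fun n : ℕ => (henon^[n] (x₀, y₀)).1) Filter.atTop Filter.atBot ∧
    Filter.Tendsto (fun n : ℕ => ‖henon^[n] (x₀, y₀)‖) Filter.atTop Filter.atTop ∧
    ∀ᶠ n : ℕ in Filter.atTop,
      henon^[n] (x₀, y₀) ∉ Set.Icc (-4 : ℝ) 4 ×ˢ Set.Icc (-4 : ℝ) 4 := by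
  have inv : ∀ n : ℕ, (henon^[n] (x₀, y₀)).1 ≤ -4 ∧
      (henon^[n] (x₀, y₀)).1 ≤ (henon^[n] (x₀, y₀)).2 := by
    intro n
    induction n with
    | zero => exact ⟨hx, hxy⟩
    | succ k ih =>
      obtain ⟨h1, h2⟩ := ih
      rw [Function.iterate_succ_apply']
      generalize henon^[k] (x₀, y₀) = p at h1 h2 ⊢
      simp only [henon]
      constructor <;> norm_num at * <;> nlinarith
  have step : ∀ n : ℕ, (henon^[n + 1] (x₀, y₀)).1 ≤ (henon^[n] (x₀, y₀)).1 - 4.4 := by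
    intro n
    obtain ⟨h1, h2⟩ := inv n
    rw [Function.iterate_succ_apply']
    generalize henon^[n] (x₀, y₀) = p at h1 h2 ⊢
    simp only [henon]
    norm_num at *
    nlinarith
  have anti : StrictAnti (fun n : ℕ => (henon^[n] (x₀, y₀)).1) := by
    refine strictAnti_nat_of_succ_lt fun n => ?_
    have := step n
    norm_num at this ⊢
    linarith
  have lin : ∀ n : ℕ, (henon^[n] (x₀, y₀)).1 ≤ -(n : ℝ) := by
    intro n
    induction n with
    | zero => simp; linarith
    | succ k ih =>
      have := step k
      push_cast
      norm_num at this ⊢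
      linarith
  have bot : Filter.Tendsto (fun n : ℕ => (henon^[n] (x₀, y₀)).1) Filter.atTop
      Filter.atBot :=
    Filter.tendsto_atBot_mono lin
      (Filter.tendsto_neg_atTop_atBot.comp tendsto_natCast_atTop_atTop)
  refine ⟨step, anti, bot, ?_, ?_⟩
  · refine Filter.tendsto_atTop_mono (fun n => ?_) (tendsto_natCast_atTop_atTop (R := ℝ))
    have h1 := norm_fst_le (henon^[n] (x₀, y₀))
    have h2 := neg_le_abs (henon^[n] (x₀, y₀)).1
    rw [Real.norm_eq_abs] at h1
    have := lin n
    linarith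
  · filter_upwards [bot.eventually_lt_atBot (-4)] with n hn hmem
    exact absurd hmem.1.1 (not_le.mpr hn)
end

section
/- Escape to infinity for the Lozi map with a = 2, b = 0.5: let (x_n, y_n) = L^[n](x₀, y₀). If x₀ ≤ −1 and y₀ ≤ −1, then for every n one has x_{n+1} ≤ x_n − 0.5, and the first-coordinate sequence (x_n) tends to −∞ (tends to atBot); in particular the orbit leaves the square Q = [−4,4] × [−4,4]. -/
/-- The Lozi map with parameters `a = 2`, `b = 0.5`. -/
noncomputable def lozi : ℝ × ℝ → ℝ × ℝ := fun p => (1 - 2 * |p.1| + 0.5 * p.2, p.1)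

/-- Escape to infinity for the Lozi map with `a = 2`, `b = 0.5`: if `x₀ ≤ −1` and
`y₀ ≤ −1`, then the first coordinate decreases by at least `0.5` at each step and tends
to `−∞`; in particular the orbit leaves the square `Q = [−4,4] × [−4,4]`. -/
theorem lozi_escape_to_infinity (x₀ y₀ : ℝ) (hx : x₀ ≤ -1) (hy : y₀ ≤ -1) :
    (∀ n : ℕ, (lozi^[n + 1] (x₀, y₀)).1 ≤ (lozi^[n] (x₀, y₀)).1 - 0.5) ∧
    Filter.Tendsto (fun n : ℕ => (lozi^[n] (x₀, y₀)).1) Filter.atTop Filter.atBot ∧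
    ∃ n : ℕ, lozi^[n] (x₀, y₀) ∉ Set.Icc (-4 : ℝ) 4 ×ˢ Set.Icc (-4 : ℝ) 4 := by
  have inv : ∀ n : ℕ, (lozi^[n] (x₀, y₀)).1 ≤ -1 ∧ (lozi^[n] (x₀, y₀)).2 ≤ -1 := by
    intro n
    induction n with
    | zero => exact ⟨hx, hy⟩
    | succ k ih =>
      obtain ⟨h1, h2⟩ := ih
      rw [Function.iterate_succ_apply']
      refine ⟨?_, h1⟩
      simp only [lozi] at h1 h2 ⊢
      rw [abs_of_nonpos (by linarith)]
      linarith
  have step : ∀ n : ℕ, (lozi^[n + 1] (x₀, y₀)).1 ≤ (lozi^[n] (x₀, y₀)).1 - 0.5 := by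
    intro n
    obtain ⟨h1, h2⟩ := inv n
    rw [Function.iterate_succ_apply']
    generalize lozi^[n] (x₀, y₀) = p at h1 h2 ⊢
    simp only [lozi]
    rw [abs_of_nonpos (by linarith)]
    linarith
  have bound : ∀ n : ℕ, (lozi^[n] (x₀, y₀)).1 ≤ (n : ℝ) * (-0.5) := by
    intro n
    induction n with
    | zero => simp; linarith
    | succ k ih =>
      have := step k
      push_cast
      linarith
  have lim : Filter.Tendsto (fun n : ℕ => (lozi^[n] (x₀, y₀)).1) Filter.atTop Filter.atBot :=
    Filter.tendsto_atBot_mono bound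
      (tendsto_natCast_atTop_atTop.atTop_mul_const_of_neg (by norm_num))
  refine ⟨step, lim, 9, fun h => ?_⟩
  have h1 := (Set.mem_prod.1 h).1.1
  have h2 := h1.trans (bound 9)
  norm_num at h2
end
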